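/- Let G be a group generated by a finite set X, with word length ℓ, and let 𝒫 ⊆ G × G. Suppose that: (D1) there is a polynomial P_1 with nonnegative coefficients such that F_{𝒫,k,l} ≤ P_1(min(k,l)) for all k, l ∈ ℕ; and (D2) there are a constant K ≥ 1 and polynomials P_2, P_3 with nonnegative coefficients and, for each g ∈ G and k, l ∈ ℕ, a subset S(g,k,l) ⊆ G³ such that: (i) for every decomposition g = g_1 g_2 with ℓ(g_1) = k and ℓ(g_2) = l there exist (f_1, ĝ, f_2) ∈ S(g,k,l), elements h_1, h_2 ∈ G, and natural numbers p_1 ≤ k, p_2 ≤ l with p_1, p_2 ≤ K·min(k,l), such that g = f_1 ĝ f_2, ĝ = h_1 h_2, (f_1, h_1) ∈ Fact_{𝒫,k−p_1,p_1}(g_1) and (h_2, f_2) ∈ Fact_{𝒫,p_2,l−p_2}(g_2); (ii) |S(g,k,l)| ≤ P_2(min(k,l)) for all g, k, l; (iii) |T(k,l)| ≤ P_3(min(k,l)) for all k, l, where T(k,l) = {ĝ ∈ G : (f_1, ĝ, f_2) ∈ S(g,k,l) for some g, f_1, f_2}. Then G has the rapid decay property with respect to ℓ. -/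

import Mathlib

open scoped Pointwise

namespace ArtinRD

/-- Word length of `g` with respect to a set `S`: the least `N` such that `g` is a
product of `N` elements of `S`. -/
noncomputable def wordLength {G : Type*} [Group G] (S : Set G) (g : G) : ℕ :=
  sInf {N : ℕ | ∃ w : List G, (∀ a ∈ w, a ∈ S) ∧ w.length = N ∧ w.prod = g}

/-- `Fact_{𝒬,k,l}(g)`: permissible factorisations of `g` into a product of elements
of lengths `k` and `l`. -/
def FactSet {G : Type*} [Group G] (ℓ : G → ℕ) (𝒬 : Set (G × G)) (k l : ℕ) (g : G) :
    Set (G × G) :=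
  {p | p ∈ 𝒬 ∧ p.1 * p.2 = g ∧ ℓ p.1 = k ∧ ℓ p.2 = l}

/-- `T(k,l)`: the set of middle elements `gmid` occurring in some `S(g,k,l)`. -/
def TSet {G : Type*} (S : G → ℕ → ℕ → Set (G × G × G)) (k l : ℕ) : Set G :=
  {g' | ∃ g f₁ f₂, (f₁, g', f₂) ∈ S g k l}

/-- Convolution of finitely supported functions on a group. -/
noncomputable def conv {G : Type*} [Group G] (φ ψ : G →₀ ℂ) : G → ℂ :=
  fun g => φ.sum fun h c => c * ψ (h⁻¹ * g)

/-- The `ℓ²` norm of a function on `G`. -/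
noncomputable def l2Norm {G : Type*} (f : G → ℂ) : ℝ := Real.sqrt (∑' g : G, ‖f g‖ ^ 2)

/-- The Sobolev norm of order `r` with respect to the length function `ℓ`. -/
noncomputable def sobolevNorm {G : Type*} (ℓ : G → ℕ) (r : ℝ) (f : G → ℂ) : ℝ :=
  Real.sqrt (∑' g : G, ‖f g‖ ^ 2 * (1 + (ℓ g : ℝ)) ^ (2 * r))

/-- The rapid decay property of `G` with respect to the length function `ℓ`. -/
def RapidDecay {G : Type*} [Group G] (ℓ : G → ℕ) : Prop :=
  ∃ C : ℝ, 0 < C ∧ ∃ r : ℝ, 0 ≤ r ∧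
    ∀ φ ψ : G →₀ ℂ,
      l2Norm (conv φ ψ) ≤ C * sobolevNorm ℓ r (fun g => φ g) * l2Norm (fun g => ψ g)

/-
Decompose `φ` and `ψ` over the spheres of `ℓ`. For `φ` supported on the sphere of radius `k` and
`ψ` on the sphere of radius `l`, the covering condition rewrites every term `φ g₁ * ψ g₂` of
`(φ * ψ) g` as a term of the convolution, at the middle element of some `(f₁, m, f₂) ∈ S g k l`, of
the slices `h ↦ φ (f₁ * h)` and `h ↦ ψ (h * f₂)`. Apply Cauchy–Schwarz twice, over `S g k l` and
over the factorisations of `m`. A triple determines `g`, so summing over `g` costs at most the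
number of middle elements, and (D1) bounds the total `ℓ²` mass of the slices. The resulting bound is
polynomial in `k` alone. Only the `2 * k + 1` spheres with `ℓ g - k ≤ l ≤ ℓ g + k` contribute to
the value at `g`, and Cauchy–Schwarz with the weights `(k + 1)⁻²` handles the sum over `k`. The
estimates are carried out in `[0, ∞]`, where no summability has to be checked.
-/

open Function Set DiscreteConvolution
open scoped ENNReal Polynomial

section WordLength

variable {G : Type*} [Group G] {Y : Set G}

lemma wordLength_prod_le {w : List G} (hw : ∀ a ∈ w, a ∈ Y) : wordLength Y w.prod ≤ w.length :=
  Nat.sInf_le ⟨w, hw, rfl, rfl⟩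

lemma exists_list_length_eq_wordLength {g : G} (hg : g ∈ Submonoid.closure Y) :
    ∃ w : List G, (∀ a ∈ w, a ∈ Y) ∧ w.length = wordLength Y g ∧ w.prod = g :=
  have ⟨w, hw, hwg⟩ := Submonoid.exists_list_of_mem_closure hg
  Nat.sInf_mem (s := {N | ∃ w : List G, (∀ a ∈ w, a ∈ Y) ∧ w.length = N ∧ w.prod = g})
    ⟨w.length, w, hw, rfl, hwg⟩

lemma wordLength_mul_le {g h : G} (hg : g ∈ Submonoid.closure Y) (hh : h ∈ Submonoid.closure Y) :
    wordLength Y (g * h) ≤ wordLength Y g + wordLength Y h := by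
  obtain ⟨v, hv, hvl, rfl⟩ := exists_list_length_eq_wordLength hg
  obtain ⟨w, hw, hwl, rfl⟩ := exists_list_length_eq_wordLength hh
  rw [← hvl, ← hwl, ← List.prod_append, ← List.length_append]
  exact wordLength_prod_le fun a ha ↦ (List.mem_append.1 ha).elim (hv a) (hw a)

lemma wordLength_inv_le (hY : Y⁻¹ = Y) {g : G} (hg : g ∈ Submonoid.closure Y) :
    wordLength Y g⁻¹ ≤ wordLength Y g := by
  obtain ⟨w, hw, hwl, rfl⟩ := exists_list_length_eq_wordLength hg
  rw [← hwl, List.prod_inv_reverse, ← List.length_map (·⁻¹), ← List.length_reverse]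
  refine wordLength_prod_le fun a ha ↦ ?_
  obtain ⟨b, hb, rfl⟩ := List.mem_map.1 (List.mem_reverse.1 ha)
  rw [← hY]
  exact inv_mem_inv.2 (hw b hb)

lemma wordLength_inv (hY : Y⁻¹ = Y) {g : G} (hg : g ∈ Submonoid.closure Y) :
    wordLength Y g⁻¹ = wordLength Y g := by
  have hg' : g⁻¹ ∈ Submonoid.closure Y := by
    rwa [← Submonoid.mem_inv, ← Submonoid.closure_inv, hY]
  exact (wordLength_inv_le hY hg).antisymm (by simpa using wordLength_inv_le hY hg')

end WordLength

section Sums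

variable {α β ι : Type*}

lemma sq_tsum_mul_le (f g : ι → ℝ≥0∞) :
    (∑' i, f i * g i) ^ 2 ≤ (∑' i, f i ^ 2) * ∑' i, g i ^ 2 := by
  have partial_le (s : Finset ι) :
      (∑ i ∈ s, f i * g i) ^ 2 ≤ (∑' i, f i ^ 2) * ∑' i, g i ^ 2 :=
    calc (∑ i ∈ s, f i * g i) ^ 2
        ≤ ((∑ i ∈ s, f i ^ (2 : ℝ)) ^ (1 / 2 : ℝ) *
            (∑ i ∈ s, g i ^ (2 : ℝ)) ^ (1 / 2 : ℝ)) ^ 2 := by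
          gcongr
          exact ENNReal.inner_le_Lp_mul_Lq s f g .two_two
      _ = (∑ i ∈ s, f i ^ 2) * ∑ i ∈ s, g i ^ 2 := by
          simp only [mul_pow, ← ENNReal.rpow_natCast, ← ENNReal.rpow_mul]
          norm_num
      _ ≤ _ := mul_le_mul' (ENNReal.sum_le_tsum s) (ENNReal.sum_le_tsum s)
  exact le_of_tendsto'
    (((ENNReal.continuous_pow 2).tendsto _).comp ENNReal.summable.hasSum) partial_le

lemma sq_tsum_subtype_le (s : Set ι) (f : s → ℝ≥0∞) :
    (∑' i, f i) ^ 2 ≤ s.encard * ∑' i, f i ^ 2 := by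
  simpa using sq_tsum_mul_le (fun _ ↦ 1) f

lemma sq_tsum_le_tsum_weighted (f : ℕ → ℝ≥0∞) :
    (∑' k, f k) ^ 2 ≤
      (∑' k : ℕ, ((k + 1 : ℝ≥0∞)⁻¹) ^ 2) * ∑' k : ℕ, (k + 1 : ℝ≥0∞) ^ 2 * f k ^ 2 := by
  have weights_cancel (k : ℕ) : (k + 1 : ℝ≥0∞)⁻¹ * ((k + 1) * f k) = f k := by
    rw [← mul_assoc, ENNReal.inv_mul_cancel (by simp) (by finiteness), one_mul]
  simpa only [weights_cancel, mul_pow] using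
    sq_tsum_mul_le (fun k : ℕ ↦ (k + 1 : ℝ≥0∞)⁻¹) fun k ↦ (k + 1) * f k

lemma tsum_inv_succ_sq_ne_top : ∑' k : ℕ, ((k + 1 : ℝ≥0∞)⁻¹) ^ 2 ≠ ∞ := by
  have summable_real : Summable fun k : ℕ ↦ (((k + 1 : ℕ) : ℝ)⁻¹) ^ 2 := by
    simpa using (summable_nat_add_iff 1).2 (Real.summable_nat_pow_inv.2 one_lt_two)
  convert summable_real.tsum_ofReal_ne_top using 3 with k
  rw [ENNReal.ofReal_pow (by positivity), ENNReal.ofReal_inv_of_pos (by positivity),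
    ENNReal.ofReal_natCast, Nat.cast_succ]

lemma tsum_sep_fiberwise (A : Set α) (π : α → β) (f : α → ℝ≥0∞) :
    ∑' b, ∑' a : {a ∈ A | π a = b}, f a = ∑' a : A, f a := by
  have cover : ⋃ b, {a ∈ A | π a = b} = A := by ext; simp
  have disjoint : (univ : Set β).PairwiseDisjoint fun b ↦ {a ∈ A | π a = b} := by
    intro b _ c _ hbc
    exact Set.disjoint_left.2 fun a hb hc ↦ hbc (hb.2.symm.trans hc.2)
  rw [← ENNReal.tsum_biUnion disjoint, cover]

lemma tsum_comp_le_of_encard_fiber_le {A : Set α} {π : α → β} {f : β → ℝ≥0∞} {n : ℕ∞}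
    (h : ∀ b, f b ≠ 0 → {a ∈ A | π a = b}.encard ≤ n) :
    ∑' a : A, f (π a) ≤ n * ∑' b, f b := by
  rw [← tsum_sep_fiberwise A π fun a ↦ f (π a), ← ENNReal.tsum_mul_left]
  refine ENNReal.tsum_le_tsum fun b ↦ ?_
  have constant_on_fiber : ∑' a : {a ∈ A | π a = b}, f (π a) = {a ∈ A | π a = b}.encard * f b := by
    rw [← ENNReal.tsum_set_const]
    exact tsum_congr fun a ↦ by rw [a.2.2]
  rw [constant_on_fiber]
  by_cases hb : f b = 0
  · simp [hb]
  · gcongr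
    exact h b hb

lemma tsum_mul_le_of_encard_middle_le {γ : Type*} {A : Set (α × β × γ)} {n : ℕ∞}
    (u : α → ℝ≥0∞) (v : γ → ℝ≥0∞) (h : ∀ a c, {b | (a, b, c) ∈ A}.encard ≤ n) :
    ∑' s : A, u s.1.1 * v s.1.2.2 ≤ n * ((∑' a, u a) * ∑' c, v c) := by
  have fiber_le (p : α × γ) : {s ∈ A | (s.1, s.2.2) = p}.encard ≤ n := by
    refine (encard_le_encard_of_injOn (f := fun s ↦ s.2.1) ?_ ?_).trans (h p.1 p.2)
    · rintro s ⟨hs, rfl⟩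
      exact hs
    · rintro ⟨a, b, c⟩ ⟨-, rfl⟩ ⟨a', b', c'⟩ ⟨-, h⟩ hb
      simp_all
  calc ∑' s : A, u s.1.1 * v s.1.2.2 ≤ n * ∑' p : α × γ, u p.1 * v p.2 :=
        tsum_comp_le_of_encard_fiber_le (f := fun p : α × γ ↦ u p.1 * v p.2) fun p _ ↦ fiber_le p
    _ = n * ((∑' a, u a) * ∑' c, v c) := by
        simp_rw [ENNReal.tsum_prod', ENNReal.tsum_mul_left, ENNReal.tsum_mul_right]

lemma tsum_le_tsum_of_injective_support {f : α → ℝ≥0∞} {g : β → ℝ≥0∞} (i : support f → β)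
    (hi : Injective i) (hfg : ∀ a : support f, f a ≤ g (i a)) : ∑' a, f a ≤ ∑' b, g b :=
  calc ∑' a, f a = ∑' a : support f, f a := (tsum_subtype_support f).symm
    _ ≤ ∑' a, g (i a) := ENNReal.tsum_le_tsum hfg
    _ ≤ ∑' b, g b := ENNReal.tsum_comp_le_tsum_of_injective hi g

lemma encard_le_card_mul {s : Set α} {π : α → β} {t : Finset β} {n : ℕ∞} (hst : MapsTo π s t)
    (hn : ∀ a ∈ s, {x ∈ s | π x = π a}.encard ≤ n) : s.encard ≤ t.card * n := by
  have cover : s ⊆ ⋃ b ∈ t, {x ∈ s | π x = b} := fun a ha ↦ by simpa [ha] using hst ha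
  have fiber_le (b : β) : {x ∈ s | π x = b}.encard ≤ n := by
    rcases {x ∈ s | π x = b}.eq_empty_or_nonempty with hb | ⟨a, ha, rfl⟩
    · simp [hb]
    · exact hn a ha
  calc s.encard ≤ ∑ b ∈ t, {x ∈ s | π x = b}.encard :=
        (encard_le_encard cover).trans (t.set_encard_biUnion_le _)
    _ ≤ t.card * n := by simpa using Finset.sum_le_sum fun b (_ : b ∈ t) ↦ fiber_le b

lemma tsum_indicator_fiber (π : α → β) (f : α → ℝ≥0∞) (a : α) :
    ∑' b, (π ⁻¹' {b}).indicator f a = f a := by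
  classical
  simp [indicator_apply, eq_comm]

lemma tsum_mul_tsum_sq_indicator_fiber (π : α → β) (w : β → ℝ≥0∞) (f : α → ℝ≥0∞) :
    ∑' b, w b * ∑' a, (π ⁻¹' {b}).indicator f a ^ 2 = ∑' a, f a ^ 2 * w (π a) := by
  classical
  simp_rw [← ENNReal.tsum_mul_left]
  rw [ENNReal.tsum_comm]
  simp [indicator_apply, ite_pow, eq_comm, mul_comm]

end Sums

section Polynomial

lemma exists_nat_polynomial_eval_ge (P : ℝ[X]) :
    ∃ Q : ℕ[X], ∀ n : ℕ, P.eval (n : ℝ) ≤ Q.eval n := by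
  refine ⟨∑ i ∈ Finset.range (P.natDegree + 1), .monomial i ⌈P.coeff i⌉₊, fun n ↦ ?_⟩
  rw [Polynomial.eval_eq_sum_range, Polynomial.eval_finsetSum]
  push_cast [Polynomial.eval_monomial]
  gcongr
  exact Nat.le_ceil _

lemma monotone_eval_nat (Q : ℕ[X]) : Monotone fun n ↦ Q.eval n := by
  intro m n hmn
  simp only [Polynomial.eval_eq_sum_range]
  gcongr

lemma eval_nat_le_mul_pow (Q : ℕ[X]) (n : ℕ) : Q.eval n ≤ Q.eval 1 * (n + 1) ^ Q.natDegree := by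
  simp only [Polynomial.eval_eq_sum_range, one_pow, mul_one, Finset.sum_mul]
  refine Finset.sum_le_sum fun i hi ↦ Nat.mul_le_mul_left _ ?_
  calc n ^ i ≤ (n + 1) ^ i := Nat.pow_le_pow_left n.le_succ i
    _ ≤ (n + 1) ^ Q.natDegree :=
      Nat.pow_le_pow_right n.succ_pos (Nat.lt_succ_iff.1 (Finset.mem_range.1 hi))

lemma exists_sq_mul_linear_mul_eval_nat_le (Q : ℕ[X]) :
    ∃ C d : ℕ, ∀ n : ℕ, (n + 1) ^ 2 * ((2 * n + 1) * Q.eval n) ≤ C * (1 + n) ^ (2 * d) := by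
  set R : ℕ[X] := (.X + 1) ^ 2 * (2 * .X + 1) * Q with hR
  refine ⟨R.eval 1, R.natDegree, fun n ↦ ?_⟩
  calc (n + 1) ^ 2 * ((2 * n + 1) * Q.eval n) = R.eval n := by
        simp only [hR, Polynomial.eval_mul, Polynomial.eval_pow, Polynomial.eval_add,
          Polynomial.eval_X, Polynomial.eval_one, Polynomial.eval_ofNat]
        ring
    _ ≤ R.eval 1 * (n + 1) ^ R.natDegree := eval_nat_le_mul_pow R n
    _ ≤ R.eval 1 * (1 + n) ^ (2 * R.natDegree) := by
        rw [add_comm n]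
        gcongr <;> omega

lemma encard_le_eval_of_ncard_le {α : Type*} {s : Set α} {P : ℝ[X]} {Q : ℕ[X]} {m n : ℕ}
    (hPQ : ∀ i : ℕ, P.eval (i : ℝ) ≤ Q.eval i) (hmn : m ≤ n)
    (hs : s.Finite ∧ (s.ncard : ℝ) ≤ P.eval (m : ℝ)) : s.encard ≤ (Q.eval n : ℕ) := by
  have ncard_le : s.ncard ≤ Q.eval m := by exact_mod_cast hs.2.trans (hPQ m)
  exact encard_le_coe_iff_finite_ncard_le.2 ⟨hs.1, ncard_le.trans (monotone_eval_nat Q hmn)⟩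

end Polynomial

lemma finite_and_ncard_le_of_subset {α : Type*} {s t : Set α} {r : ℝ} (hst : s ⊆ t)
    (ht : t.Finite ∧ (t.ncard : ℝ) ≤ r) : s.Finite ∧ (s.ncard : ℝ) ≤ r :=
  ⟨ht.1.subset hst, (Nat.cast_le.2 (ncard_le_ncard hst ht.1)).trans ht.2⟩

section Convolution

local infixl:67 " ⋆ " => convolution (LinearMap.mul ℝ≥0∞ ℝ≥0∞)

section Monoid

variable {M : Type*} [Monoid M]

lemma convolution_tsum_left {ι : Type*} (φ : ι → M → ℝ≥0∞) (ψ : M → ℝ≥0∞) (g : M) :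
    ((fun x ↦ ∑' i, φ i x) ⋆ ψ) g = ∑' i, (φ i ⋆ ψ) g := by
  simp only [convolution, LinearMap.mul_apply', ← ENNReal.tsum_mul_right]
  exact ENNReal.tsum_comm

lemma convolution_tsum_right {ι : Type*} (φ : M → ℝ≥0∞) (ψ : ι → M → ℝ≥0∞) (g : M) :
    (φ ⋆ fun x ↦ ∑' i, ψ i x) g = ∑' i, (φ ⋆ ψ i) g := by
  simp only [convolution, LinearMap.mul_apply', ← ENNReal.tsum_mul_left]
  exact ENNReal.tsum_comm

lemma tsum_sq_convolution_le_tsum_spheres (ℓ : M → ℕ) (φ ψ : M → ℝ≥0∞) :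
    ∑' g, (φ ⋆ ψ) g ^ 2 ≤ (∑' k : ℕ, ((k + 1 : ℝ≥0∞)⁻¹) ^ 2) *
      ∑' k : ℕ, (k + 1 : ℝ≥0∞) ^ 2 * ∑' g, ((ℓ ⁻¹' {k}).indicator φ ⋆ ψ) g ^ 2 := by
  have decompose (g : M) : (φ ⋆ ψ) g = ∑' k, ((ℓ ⁻¹' {k}).indicator φ ⋆ ψ) g := by
    rw [← convolution_tsum_left]
    simp only [tsum_indicator_fiber]
  calc ∑' g, (φ ⋆ ψ) g ^ 2
      ≤ ∑' g, (∑' k : ℕ, ((k + 1 : ℝ≥0∞)⁻¹) ^ 2) *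
          ∑' k : ℕ, (k + 1 : ℝ≥0∞) ^ 2 * ((ℓ ⁻¹' {k}).indicator φ ⋆ ψ) g ^ 2 :=
        ENNReal.tsum_le_tsum fun g ↦ by
          rw [decompose]
          exact sq_tsum_le_tsum_weighted _
    _ = _ := by
        rw [ENNReal.tsum_mul_left, ENNReal.tsum_comm]
        simp only [ENNReal.tsum_mul_left]

lemma exists_of_convolution_ne_zero {φ ψ : M → ℝ≥0∞} {g : M} (h : (φ ⋆ ψ) g ≠ 0) :
    ∃ x y, x * y = g ∧ φ x ≠ 0 ∧ ψ y ≠ 0 := by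
  contrapose! h
  simp only [convolution, LinearMap.mul_apply', ENNReal.tsum_eq_zero, mul_eq_zero]
  exact fun p ↦ or_iff_not_imp_left.2 (h _ _ (mem_mulFiber.1 p.2))

/-- The function `(f, h) ↦ φ (f * h)` on the set `A` of admissible factorisations, extended by `0`.
Its rows and columns are the slices of `φ` to which Cauchy–Schwarz is applied. -/
noncomputable def factorLift (A : Set (M × M)) (φ : M → ℝ≥0∞) : M × M → ℝ≥0∞ :=
  A.indicator fun p ↦ φ (p.1 * p.2)

lemma tsum_sq_factorLift_le {A : Set (M × M)} {φ : M → ℝ≥0∞} {a : ℕ∞}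
    (hA : ∀ g, φ g ≠ 0 → {p ∈ A | p.1 * p.2 = g}.encard ≤ a) :
    ∑' p, factorLift A φ p ^ 2 ≤ a * ∑' g, φ g ^ 2 := by
  have sq_factorLift (p : M × M) :
      factorLift A φ p ^ 2 = A.indicator (fun p ↦ φ (p.1 * p.2) ^ 2) p := by
    by_cases hp : p ∈ A <;> simp [factorLift, hp]
  simp only [sq_factorLift, ← tsum_subtype]
  exact tsum_comp_le_of_encard_fiber_le (f := fun g ↦ φ g ^ 2) fun g hg ↦ hA g (by simpa using hg)

variable {A B : Set (M × M)} {𝒮 : Set (M × M × M)} {φ ψ : M → ℝ≥0∞}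

lemma convolution_le_tsum_of_cover
    (hcover : ∀ x y, φ x ≠ 0 → ψ y ≠ 0 → ∃ f₁ h₁ h₂ f₂, (f₁, h₁) ∈ A ∧ (h₂, f₂) ∈ B ∧
      (f₁, h₁ * h₂, f₂) ∈ 𝒮 ∧ f₁ * h₁ = x ∧ h₂ * f₂ = y) (g : M) :
    (φ ⋆ ψ) g ≤ ∑' s : {s ∈ 𝒮 | s.1 * s.2.1 * s.2.2 = g},
      ((fun h ↦ factorLift A φ (s.1.1, h)) ⋆ fun h ↦ factorLift B ψ (h, s.1.2.2)) s.1.2.1 := by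
  simp only [convolution, LinearMap.mul_apply']
  rw [← ENNReal.tsum_sigma' fun
    q : (s : {s ∈ 𝒮 | s.1 * s.2.1 * s.2.2 = g}) × mulFiber s.1.2.1 ↦
      factorLift A φ (q.1.1.1, q.2.1.1) * factorLift B ψ (q.2.1.2, q.1.1.2.2)]
  have exists_refinement (p : support fun p : mulFiber g ↦ φ p.1.1 * ψ p.1.2) :
      ∃ q : (s : {s ∈ 𝒮 | s.1 * s.2.1 * s.2.2 = g}) × mulFiber s.1.2.1,
        (q.1.1.1, q.2.1.1) ∈ A ∧ (q.2.1.2, q.1.1.2.2) ∈ B ∧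
          (q.1.1.1 * q.2.1.1, q.2.1.2 * q.1.1.2.2) = p.1.1 := by
    obtain ⟨⟨⟨x, y⟩, hxy⟩, hne⟩ := p
    obtain ⟨f₁, h₁, h₂, f₂, hA, hB, h𝒮, rfl, rfl⟩ :=
      hcover x y (left_ne_zero_of_mul hne) (right_ne_zero_of_mul hne)
    have hprod : f₁ * (h₁ * h₂) * f₂ = g := by simpa [mem_mulFiber, mul_assoc] using hxy
    exact ⟨⟨⟨(f₁, h₁ * h₂, f₂), h𝒮, hprod⟩, ⟨(h₁, h₂), mem_mulFiber.2 rfl⟩⟩, hA, hB, rfl⟩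
  choose i hA hB hi using exists_refinement
  refine tsum_le_tsum_of_injective_support i
    (fun p q hpq ↦ Subtype.ext (Subtype.ext (by rw [← hi p, ← hi q, hpq]))) fun p ↦ le_of_eq ?_
  simp only [factorLift, indicator_of_mem (hA p), indicator_of_mem (hB p), ← hi p]

end Monoid

section CancelMonoid

variable {M : Type*} [CancelMonoid M]

lemma sq_convolution_le (u v : M → ℝ≥0∞) (m : M) :
    (u ⋆ v) m ^ 2 ≤ (∑' h, u h ^ 2) * ∑' h, v h ^ 2 := by
  have fst_injective : Injective fun p : mulFiber m ↦ p.1.1 := by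
    rintro ⟨⟨a, b⟩, hab⟩ ⟨⟨a', b'⟩, hab'⟩ (rfl : a = a')
    have : a * b = a * b' := (mem_mulFiber.1 hab).trans (mem_mulFiber.1 hab').symm
    simpa using this
  have snd_injective : Injective fun p : mulFiber m ↦ p.1.2 := by
    rintro ⟨⟨a, b⟩, hab⟩ ⟨⟨a', b'⟩, hab'⟩ (rfl : b = b')
    have : a * b = a' * b := (mem_mulFiber.1 hab).trans (mem_mulFiber.1 hab').symm
    simpa using this
  exact (sq_tsum_mul_le _ _).trans <| mul_le_mul'
    (ENNReal.tsum_comp_le_tsum_of_injective fst_injective fun h ↦ u h ^ 2)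
    (ENNReal.tsum_comp_le_tsum_of_injective snd_injective fun h ↦ v h ^ 2)

theorem tsum_sq_convolution_le_of_cover {A B : Set (M × M)} {𝒮 : Set (M × M × M)}
    {φ ψ : M → ℝ≥0∞} {a b n t : ℕ∞}
    (hA : ∀ g, φ g ≠ 0 → {p ∈ A | p.1 * p.2 = g}.encard ≤ a)
    (hB : ∀ g, ψ g ≠ 0 → {p ∈ B | p.1 * p.2 = g}.encard ≤ b)
    (h𝒮 : ∀ g, {s ∈ 𝒮 | s.1 * s.2.1 * s.2.2 = g}.encard ≤ n)
    (hmid : ∀ f₁ f₂, {m | (f₁, m, f₂) ∈ 𝒮}.encard ≤ t)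
    (hcover : ∀ x y, φ x ≠ 0 → ψ y ≠ 0 → ∃ f₁ h₁ h₂ f₂, (f₁, h₁) ∈ A ∧ (h₂, f₂) ∈ B ∧
      (f₁, h₁ * h₂, f₂) ∈ 𝒮 ∧ f₁ * h₁ = x ∧ h₂ * f₂ = y) :
    ∑' g, (φ ⋆ ψ) g ^ 2 ≤ n * t * a * b * ((∑' g, φ g ^ 2) * ∑' g, ψ g ^ 2) := by
  set Φ : M → ℝ≥0∞ := fun f ↦ ∑' h, factorLift A φ (f, h) ^ 2
  set Ψ : M → ℝ≥0∞ := fun f ↦ ∑' h, factorLift B ψ (h, f) ^ 2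
  have tsum_Φ : ∑' f, Φ f ≤ a * ∑' g, φ g ^ 2 :=
    ENNReal.tsum_prod'.symm.trans_le (tsum_sq_factorLift_le hA)
  have tsum_Ψ : ∑' f, Ψ f ≤ b * ∑' g, ψ g ^ 2 :=
    (ENNReal.tsum_comm.trans ENNReal.tsum_prod'.symm).trans_le (tsum_sq_factorLift_le hB)
  have pointwise (g : M) : (φ ⋆ ψ) g ^ 2 ≤
      n * ∑' s : {s ∈ 𝒮 | s.1 * s.2.1 * s.2.2 = g}, Φ s.1.1 * Ψ s.1.2.2 := by
    refine (pow_le_pow_left' (convolution_le_tsum_of_cover hcover g) 2).trans <|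
      (sq_tsum_subtype_le _ _).trans ?_
    gcongr
    exacts [h𝒮 g, sq_convolution_le _ _ _]
  calc ∑' g, (φ ⋆ ψ) g ^ 2
      ≤ n * ∑' g, ∑' s : {s ∈ 𝒮 | s.1 * s.2.1 * s.2.2 = g}, Φ s.1.1 * Ψ s.1.2.2 := by
        rw [← ENNReal.tsum_mul_left]
        exact ENNReal.tsum_le_tsum pointwise
    _ = n * ∑' s : 𝒮, Φ s.1.1 * Ψ s.1.2.2 := by
        rw [tsum_sep_fiberwise 𝒮 (fun s ↦ s.1 * s.2.1 * s.2.2) fun s ↦ Φ s.1 * Ψ s.2.2]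
    _ ≤ n * (t * ((∑' f, Φ f) * ∑' f, Ψ f)) := by
        gcongr
        exact tsum_mul_le_of_encard_middle_le Φ Ψ hmid
    _ ≤ n * (t * ((a * ∑' g, φ g ^ 2) * (b * ∑' g, ψ g ^ 2))) := by gcongr
    _ = _ := by ring

end CancelMonoid

section Norms

variable {α : Type*}

lemma l2Norm_eq_sqrt_toReal (f : α → ℂ) : l2Norm f = √(∑' a, ‖f a‖ₑ ^ 2).toReal := by
  rw [l2Norm, ENNReal.tsum_toReal_eq fun a ↦ by finiteness]
  simp

lemma sobolevNorm_natCast_eq_sqrt_toReal (ℓ : α → ℕ) (d : ℕ) (f : α → ℂ) :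
    sobolevNorm ℓ d f = √(∑' a, ‖f a‖ₑ ^ 2 * (1 + ℓ a : ℝ≥0∞) ^ (2 * d)).toReal := by
  rw [sobolevNorm, ENNReal.tsum_toReal_eq fun a ↦ by finiteness]
  congr! with a
  rw [show (2 * d : ℝ) = (2 * d : ℕ) by push_cast; rfl, Real.rpow_natCast, ENNReal.toReal_mul,
    ENNReal.toReal_pow, ENNReal.toReal_pow, ENNReal.toReal_add (by simp) (by simp)]
  simp

lemma tsum_enorm_sq_mul_ne_top (f : α →₀ ℂ) {w : α → ℝ≥0∞} (hw : ∀ a, w a ≠ ∞) :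
    ∑' a, ‖f a‖ₑ ^ 2 * w a ≠ ∞ := by
  rw [tsum_eq_sum (s := f.support) fun a ha ↦ by simp [Finsupp.notMem_support_iff.1 ha]]
  exact ENNReal.sum_ne_top.2 fun a _ ↦ ENNReal.mul_ne_top (by finiteness) (hw a)

end Norms

section Length

variable {G : Type*} [Group G] {ℓ : G → ℕ} {φ : G → ℝ≥0∞}

lemma convolution_eq_tsum_mul_inv (φ ψ : G → ℝ≥0∞) (g : G) :
    (φ ⋆ ψ) g = ∑' h, φ h * ψ (h⁻¹ * g) := by
  let e : G ≃ mulFiber g :=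
    { toFun h := ⟨(h, h⁻¹ * g), by simp [mem_mulFiber]⟩
      invFun p := p.1.1
      left_inv _ := rfl
      right_inv := by
        rintro ⟨⟨x, y⟩, hxy⟩
        obtain rfl : x * y = g := mem_mulFiber.1 hxy
        simp }
  exact (e.tsum_eq fun p ↦ φ p.1.1 * ψ p.1.2).symm

lemma mem_Icc_of_convolution_ne_zero (hinv : ∀ g, ℓ g⁻¹ = ℓ g)
    (hmul : ∀ g h, ℓ (g * h) ≤ ℓ g + ℓ h) {ψ : G → ℝ≥0∞} {k l : ℕ} (hφ : support φ ⊆ ℓ ⁻¹' {k})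
    (hψ : support ψ ⊆ ℓ ⁻¹' {l}) {g : G} (hg : (φ ⋆ ψ) g ≠ 0) :
    l ∈ Icc (ℓ g - k) (ℓ g + k) := by
  obtain ⟨x, y, rfl, hx, hy⟩ := exists_of_convolution_ne_zero hg
  obtain rfl : ℓ x = k := hφ hx
  obtain rfl : ℓ y = l := hψ hy
  have upper := hmul x⁻¹ (x * y)
  rw [inv_mul_cancel_left, hinv] at upper
  exact ⟨Nat.sub_le_iff_le_add'.2 (hmul x y), by omega⟩

lemma tsum_sq_convolution_le_of_support_subset_sphere (hinv : ∀ g, ℓ g⁻¹ = ℓ g)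
    (hmul : ∀ g h, ℓ (g * h) ≤ ℓ g + ℓ h) {k : ℕ} (hφ : support φ ⊆ ℓ ⁻¹' {k}) {B : ℝ≥0∞}
    (hB : ∀ l ψ, support ψ ⊆ ℓ ⁻¹' {l} → ∑' g, (φ ⋆ ψ) g ^ 2 ≤ B * ∑' g, ψ g ^ 2)
    (ψ : G → ℝ≥0∞) :
    ∑' g, (φ ⋆ ψ) g ^ 2 ≤ (2 * k + 1) * (B * ∑' g, ψ g ^ 2) := by
  set ψₗ : ℕ → G → ℝ≥0∞ := fun l ↦ (ℓ ⁻¹' {l}).indicator ψ with hψₗ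
  have triangle (g : G) : support (fun l ↦ (φ ⋆ ψₗ l) g) ⊆ Icc (ℓ g - k) (ℓ g + k) :=
    fun l ↦ mem_Icc_of_convolution_ne_zero hinv hmul hφ support_indicator_subset
  have card_Icc (g : G) : (Icc (ℓ g - k) (ℓ g + k)).encard ≤ (2 * k + 1 : ℕ) := by
    rw [← Finset.coe_Icc, encard_coe_eq_coe_finsetCard, Nat.card_Icc]
    exact_mod_cast (by omega : ℓ g + k + 1 - (ℓ g - k) ≤ 2 * k + 1)
  have pointwise (g : G) : (φ ⋆ ψ) g ^ 2 ≤ (2 * k + 1) * ∑' l, (φ ⋆ ψₗ l) g ^ 2 :=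
    calc (φ ⋆ ψ) g ^ 2 = (∑' l : Icc (ℓ g - k) (ℓ g + k), (φ ⋆ ψₗ l) g) ^ 2 := by
          rw [tsum_subtype_eq_of_support_subset (triangle g), ← convolution_tsum_right]
          simp only [hψₗ, tsum_indicator_fiber]
      _ ≤ (Icc (ℓ g - k) (ℓ g + k)).encard * ∑' l : Icc (ℓ g - k) (ℓ g + k), (φ ⋆ ψₗ l) g ^ 2 :=
          sq_tsum_subtype_le _ _
      _ ≤ ((2 * k + 1 : ℕ) : ℕ∞) * ∑' l, (φ ⋆ ψₗ l) g ^ 2 := by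
          gcongr
          · exact card_Icc g
          · exact ENNReal.tsum_comp_le_tsum_of_injective Subtype.val_injective _
      _ = _ := by simp
  calc ∑' g, (φ ⋆ ψ) g ^ 2 ≤ ∑' g, (2 * k + 1) * ∑' l, (φ ⋆ ψₗ l) g ^ 2 :=
        ENNReal.tsum_le_tsum pointwise
    _ = (2 * k + 1) * ∑' l, ∑' g, (φ ⋆ ψₗ l) g ^ 2 := by
        rw [ENNReal.tsum_mul_left, ENNReal.tsum_comm]
    _ ≤ (2 * k + 1) * ∑' l, B * ∑' g, ψₗ l g ^ 2 := by
        gcongr with l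
        exact hB l _ support_indicator_subset
    _ = _ := by
        rw [tsum_mul_tsum_sq_indicator_fiber ℓ (fun _ ↦ B), ENNReal.tsum_mul_right, mul_comm B]

lemma enorm_conv_le (φ ψ : G →₀ ℂ) (g : G) :
    ‖conv φ ψ g‖ₑ ≤ ((fun x ↦ ‖φ x‖ₑ) ⋆ fun x ↦ ‖ψ x‖ₑ) g := by
  rw [convolution_eq_tsum_mul_inv]
  calc ‖conv φ ψ g‖ₑ ≤ ∑ h ∈ φ.support, ‖φ h * ψ (h⁻¹ * g)‖ₑ := enorm_sum_le _ _
    _ = ∑ h ∈ φ.support, ‖φ h‖ₑ * ‖ψ (h⁻¹ * g)‖ₑ := by simp only [enorm_mul]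
    _ ≤ _ := ENNReal.sum_le_tsum _

lemma rapidDecay_of_tsum_sq_convolution_le {Z : ℝ≥0∞} (hZ : Z ≠ ∞) (d : ℕ)
    (h : ∀ φ ψ : G → ℝ≥0∞, ∑' g, (φ ⋆ ψ) g ^ 2 ≤
      Z * ((∑' g, φ g ^ 2 * (1 + ℓ g : ℝ≥0∞) ^ (2 * d)) * ∑' g, ψ g ^ 2)) :
    RapidDecay ℓ := by
  refine ⟨√(Z.toReal + 1), by positivity, d, by positivity, fun φ ψ ↦ ?_⟩
  rw [l2Norm_eq_sqrt_toReal, l2Norm_eq_sqrt_toReal, sobolevNorm_natCast_eq_sqrt_toReal]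
  rw [← Real.sqrt_mul (by positivity), ← Real.sqrt_mul (by positivity)]
  refine Real.sqrt_le_sqrt ?_
  have φ_ne_top := tsum_enorm_sq_mul_ne_top φ (w := fun g ↦ (1 + ℓ g : ℝ≥0∞) ^ (2 * d))
    fun g ↦ by finiteness
  have ψ_ne_top : ∑' g, ‖ψ g‖ₑ ^ 2 ≠ ∞ := by
    simpa using tsum_enorm_sq_mul_ne_top ψ (w := 1) fun _ ↦ by simp
  have bound :=
    (ENNReal.tsum_le_tsum fun g ↦ pow_le_pow_left' (enorm_conv_le φ ψ g) 2).trans (h _ _)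
  refine (ENNReal.toReal_mono (by finiteness) bound).trans ?_
  rw [ENNReal.toReal_mul, ENNReal.toReal_mul, mul_assoc]
  gcongr
  exact le_add_of_nonneg_right zero_le_one

theorem rapidDecay_of_sphere_bound (hinv : ∀ g, ℓ g⁻¹ = ℓ g)
    (hmul : ∀ g h, ℓ (g * h) ≤ ℓ g + ℓ h) (W : ℕ[X])
    (hW : ∀ k l (φ ψ : G → ℝ≥0∞), support φ ⊆ ℓ ⁻¹' {k} → support ψ ⊆ ℓ ⁻¹' {l} →
      ∑' g, (φ ⋆ ψ) g ^ 2 ≤ W.eval k * ((∑' g, φ g ^ 2) * ∑' g, ψ g ^ 2)) :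
    RapidDecay ℓ := by
  obtain ⟨C, d, hC⟩ := exists_sq_mul_linear_mul_eval_nat_le W
  have sphere_bound (k : ℕ) (φ ψ : G → ℝ≥0∞) (hφ : support φ ⊆ ℓ ⁻¹' {k}) :
      (k + 1 : ℝ≥0∞) ^ 2 * ∑' g, (φ ⋆ ψ) g ^ 2 ≤
        C * (1 + k) ^ (2 * d) * ((∑' g, φ g ^ 2) * ∑' g, ψ g ^ 2) := by
    have bound := tsum_sq_convolution_le_of_support_subset_sphere hinv hmul hφ
      (fun l χ hχ ↦ (hW k l φ χ hφ hχ).trans_eq (mul_assoc _ _ _).symm) ψ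
    calc _ ≤ (k + 1 : ℝ≥0∞) ^ 2 *
          ((2 * k + 1) * (W.eval k * (∑' g, φ g ^ 2) * ∑' g, ψ g ^ 2)) := by gcongr
      _ = (k + 1 : ℝ≥0∞) ^ 2 * ((2 * k + 1) * W.eval k) *
          ((∑' g, φ g ^ 2) * ∑' g, ψ g ^ 2) := by ring
      _ ≤ _ := mul_le_mul_left (by exact_mod_cast hC k) _
  refine rapidDecay_of_tsum_sq_convolution_le (ENNReal.mul_ne_top tsum_inv_succ_sq_ne_top
    (ENNReal.natCast_ne_top C)) d fun φ ψ ↦ ?_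
  calc ∑' g, (φ ⋆ ψ) g ^ 2
      ≤ (∑' k : ℕ, ((k + 1 : ℝ≥0∞)⁻¹) ^ 2) *
          ∑' k : ℕ, (k + 1 : ℝ≥0∞) ^ 2 * ∑' g, ((ℓ ⁻¹' {k}).indicator φ ⋆ ψ) g ^ 2 :=
        tsum_sq_convolution_le_tsum_spheres ℓ φ ψ
    _ ≤ (∑' k : ℕ, ((k + 1 : ℝ≥0∞)⁻¹) ^ 2) * ∑' k : ℕ, C * (1 + k) ^ (2 * d) *
          ((∑' g, (ℓ ⁻¹' {k}).indicator φ g ^ 2) * ∑' g, ψ g ^ 2) :=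
        mul_le_mul' le_rfl
          (ENNReal.tsum_le_tsum fun k ↦ sphere_bound k _ ψ support_indicator_subset)
    _ = _ := by
        simp only [mul_assoc, ENNReal.tsum_mul_left]
        simp only [← mul_assoc, ENNReal.tsum_mul_right]
        simp only [mul_assoc, tsum_mul_tsum_sq_indicator_fiber ℓ fun k ↦ (1 + k : ℝ≥0∞) ^ (2 * d)]

/-- The pairs of `𝒬` whose lengths add up to `k` and of which one has length at most `q`: the
permissible factorisations, without loss of length, of elements of length `k` into a long and a
short factor. -/
def shortFactorisations (ℓ : G → ℕ) (𝒬 : Set (G × G)) (k q : ℕ) : Set (G × G) :=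
  {p ∈ 𝒬 | ℓ p.1 + ℓ p.2 = k ∧ min (ℓ p.1) (ℓ p.2) ≤ q}

variable {𝒬 : Set (G × G)}

lemma mem_shortFactorisations_of_mem_factSet {i j q : ℕ} {g : G} {p : G × G}
    (hp : p ∈ FactSet ℓ 𝒬 i j g) (hij : min i j ≤ q) : p ∈ shortFactorisations ℓ 𝒬 (i + j) q := by
  obtain ⟨hp𝒬, -, rfl, rfl⟩ := hp
  exact ⟨hp𝒬, rfl, hij⟩

lemma encard_shortFactorisations_le {k q : ℕ} {g : G} {N : ℕ∞}
    (hN : ∀ i j, i + j = k → min i j ≤ q → (FactSet ℓ 𝒬 i j g).encard ≤ N) :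
    {p ∈ shortFactorisations ℓ 𝒬 k q | p.1 * p.2 = g}.encard ≤ (2 * (q + 1) : ℕ) * N := by
  set t := Finset.Icc 0 q ∪ Finset.Icc (k - q) k with ht
  have card_t : t.card ≤ 2 * (q + 1) := by
    refine (Finset.card_union_le _ _).trans ?_
    simp only [Nat.card_Icc]
    omega
  have maps_to : MapsTo (fun p ↦ ℓ p.1) {p ∈ shortFactorisations ℓ 𝒬 k q | p.1 * p.2 = g} t := by
    rintro p ⟨⟨-, hsum, hmin⟩, -⟩
    simp only [ht, Finset.coe_union, Finset.coe_Icc, mem_union, mem_Icc]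
    omega
  refine (encard_le_card_mul maps_to ?_).trans (mul_le_mul_left (by exact_mod_cast card_t) N)
  rintro p ⟨⟨-, hsum, hmin⟩, -⟩
  refine (encard_le_encard ?_).trans (hN _ _ hsum hmin)
  rintro p' ⟨⟨⟨hp𝒬, hsum', -⟩, hprod⟩, hfst : ℓ p'.1 = ℓ p.1⟩
  exact ⟨hp𝒬, hprod, hfst, by omega⟩

theorem tsum_sq_convolution_le_of_sphere_cover {k l q : ℕ} {N₁ N₂ N₃ : ℕ∞}
    {S : G → Set (G × G × G)} {ψ : G → ℝ≥0∞}
    (hfact : ∀ i j g, ℓ g = i + j → min i j ≤ q → (FactSet ℓ 𝒬 i j g).encard ≤ N₁)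
    (hS : ∀ g, (S g).encard ≤ N₂)
    (hmid : ∀ f₁ f₂, {m | ∃ g, (f₁, m, f₂) ∈ S g}.encard ≤ N₃)
    (hcover : ∀ g₁ g₂, ℓ g₁ = k → ℓ g₂ = l → ∃ f₁ h₁ h₂ f₂,
      (f₁, h₁) ∈ shortFactorisations ℓ 𝒬 k q ∧ (h₂, f₂) ∈ shortFactorisations ℓ 𝒬 l q ∧
        (f₁, h₁ * h₂, f₂) ∈ S (g₁ * g₂) ∧ f₁ * h₁ = g₁ ∧ h₂ * f₂ = g₂)
    (hφ : support φ ⊆ ℓ ⁻¹' {k}) (hψ : support ψ ⊆ ℓ ⁻¹' {l}) :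
    ∑' g, (φ ⋆ ψ) g ^ 2 ≤ N₂ * N₃ * ((2 * (q + 1) : ℕ) * N₁) ^ 2 *
      ((∑' g, φ g ^ 2) * ∑' g, ψ g ^ 2) := by
  have few_factorisations {r : ℕ} {χ : G → ℝ≥0∞} (hχ : support χ ⊆ ℓ ⁻¹' {r}) (g : G)
      (hg : χ g ≠ 0) :
      {p ∈ shortFactorisations ℓ 𝒬 r q | p.1 * p.2 = g}.encard ≤ (2 * (q + 1) : ℕ) * N₁ :=
    encard_shortFactorisations_le fun i j hij ↦ hfact i j g ((hχ hg).trans hij.symm)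
  have bound := tsum_sq_convolution_le_of_cover (𝒮 := {s | s ∈ S (s.1 * s.2.1 * s.2.2)})
    (few_factorisations hφ) (few_factorisations hψ)
    (fun g ↦ (encard_le_encard (by rintro s ⟨hs, rfl⟩; exact hs)).trans (hS g))
    (fun f₁ f₂ ↦ (encard_le_encard fun m hm ↦ mem_ofPred.2 ⟨f₁ * m * f₂, hm⟩).trans (hmid f₁ f₂))
    (fun x y hx hy ↦ by
      obtain ⟨f₁, h₁, h₂, f₂, hf₁, hf₂, hs, rfl, rfl⟩ := hcover x y (hφ hx) (hψ hy)
      exact ⟨f₁, h₁, h₂, f₂, hf₁, hf₂, by simpa [mul_assoc] using hs, rfl, rfl⟩)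
  convert bound using 2
  push_cast
  ring

end Length

end Convolution

theorem rapidDecay_of_D1_D2_general
    {G : Type*} [Group G]
    (ℓ : G → ℕ) (hinv : ∀ g, ℓ g⁻¹ = ℓ g) (hmul : ∀ g h, ℓ (g * h) ≤ ℓ g + ℓ h)
    (𝒬 : Set (G × G))
    (P₁ : Polynomial ℝ)
    (hD1 : ∀ k l : ℕ, ∀ g : G, ℓ g = k + l →
      (FactSet ℓ 𝒬 k l g).Finite ∧
      ((FactSet ℓ 𝒬 k l g).ncard : ℝ) ≤ P₁.eval ((min k l : ℕ) : ℝ))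
    (K : ℕ)
    (P₂ P₃ : Polynomial ℝ)
    (S : G → ℕ → ℕ → Set (G × G × G))
    (hcover : ∀ (g : G) (k l : ℕ) (g₁ g₂ : G), g = g₁ * g₂ → ℓ g₁ = k → ℓ g₂ = l →
      ∃ f₁ gmid f₂ h₁ h₂ : G, ∃ p₁ p₂ : ℕ,
        (f₁, gmid, f₂) ∈ S g k l ∧ p₁ ≤ k ∧ p₂ ≤ l ∧
        p₁ ≤ K * min k l ∧ p₂ ≤ K * min k l ∧
        g = f₁ * gmid * f₂ ∧ gmid = h₁ * h₂ ∧
        (f₁, h₁) ∈ FactSet ℓ 𝒬 (k - p₁) p₁ g₁ ∧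
        (h₂, f₂) ∈ FactSet ℓ 𝒬 p₂ (l - p₂) g₂)
    (hS : ∀ (g : G) (k l : ℕ), (S g k l).Finite ∧
      ((S g k l).ncard : ℝ) ≤ P₂.eval ((min k l : ℕ) : ℝ))
    (hT : ∀ (k l : ℕ) (f₁ f₂ : G), {m | ∃ g, (f₁, m, f₂) ∈ S g k l}.Finite ∧
      ({m | ∃ g, (f₁, m, f₂) ∈ S g k l}.ncard : ℝ) ≤ P₃.eval ((min k l : ℕ) : ℝ)) :
    RapidDecay ℓ := by
  obtain ⟨Q₁, hQ₁⟩ := exists_nat_polynomial_eval_ge P₁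
  obtain ⟨Q₂, hQ₂⟩ := exists_nat_polynomial_eval_ge P₂
  obtain ⟨Q₃, hQ₃⟩ := exists_nat_polynomial_eval_ge P₃
  refine rapidDecay_of_sphere_bound hinv hmul
    (Q₂ * Q₃ * (2 * (K * .X + 1) * Q₁.comp (K * .X)) ^ 2) fun k l φ ψ hφ hψ ↦ ?_
  have bound := tsum_sq_convolution_le_of_sphere_cover (q := K * k) (S := fun g ↦ S g k l)
    (fun i j g hg hij ↦ encard_le_eval_of_ncard_le hQ₁ hij (hD1 i j g hg))
    (fun g ↦ encard_le_eval_of_ncard_le hQ₂ (min_le_left k l) (hS g k l))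
    (fun f₁ f₂ ↦ encard_le_eval_of_ncard_le hQ₃ (min_le_left k l) (hT k l f₁ f₂))
    (fun g₁ g₂ hk hl ↦ by
      obtain ⟨f₁, _, f₂, h₁, h₂, p₁, p₂, hs, hp₁, hp₂, hp₁K, hp₂K, -, rfl, hf₁, hf₂⟩ :=
        hcover _ k l g₁ g₂ rfl hk hl
      have K_min_le : K * min k l ≤ K * k := Nat.mul_le_mul_left K (min_le_left k l)
      have short₁ := mem_shortFactorisations_of_mem_factSet hf₁
        ((min_le_right _ _).trans (hp₁K.trans K_min_le))
      have short₂ := mem_shortFactorisations_of_mem_factSet hf₂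
        ((min_le_left _ _).trans (hp₂K.trans K_min_le))
      rw [Nat.sub_add_cancel hp₁] at short₁
      rw [Nat.add_sub_cancel' hp₂] at short₂
      exact ⟨f₁, h₁, h₂, f₂, short₁, short₂, hs, hf₁.2.1, hf₂.2.1⟩) hφ hψ
  simpa using bound

/-- **Theorem.** Conditions D1 and D2 on a set `𝒬` of permissible factorisations imply
the rapid decay property with respect to the word length. -/
theorem rapidDecay_of_D1_D2
    {G : Type*} [Group G] (X : Set G) (hXfin : X.Finite)
    (hXgen : Subgroup.closure X = ⊤)
    (ℓ : G → ℕ) (hℓ : ∀ g, ℓ g = wordLength (X ∪ X⁻¹) g)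
    (𝒬 : Set (G × G))
    -- Condition D1
    (P₁ : Polynomial ℝ) (hP₁ : ∀ i, 0 ≤ P₁.coeff i)
    (hD1 : ∀ k l : ℕ, ∀ g : G, ℓ g = k + l →
      (FactSet ℓ 𝒬 k l g).Finite ∧
      ((FactSet ℓ 𝒬 k l g).ncard : ℝ) ≤ P₁.eval ((min k l : ℕ) : ℝ))
    -- Condition D2
    (K : ℕ) (hK : 1 ≤ K)
    (P₂ P₃ : Polynomial ℝ) (hP₂ : ∀ i, 0 ≤ P₂.coeff i) (hP₃ : ∀ i, 0 ≤ P₃.coeff i)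
    (S : G → ℕ → ℕ → Set (G × G × G))
    (hcover : ∀ (g : G) (k l : ℕ) (g₁ g₂ : G), g = g₁ * g₂ → ℓ g₁ = k → ℓ g₂ = l →
      ∃ f₁ gmid f₂ h₁ h₂ : G, ∃ p₁ p₂ : ℕ,
        (f₁, gmid, f₂) ∈ S g k l ∧ p₁ ≤ k ∧ p₂ ≤ l ∧
        p₁ ≤ K * min k l ∧ p₂ ≤ K * min k l ∧
        g = f₁ * gmid * f₂ ∧ gmid = h₁ * h₂ ∧
        (f₁, h₁) ∈ FactSet ℓ 𝒬 (k - p₁) p₁ g₁ ∧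
        (h₂, f₂) ∈ FactSet ℓ 𝒬 p₂ (l - p₂) g₂)
    (hS : ∀ (g : G) (k l : ℕ), (S g k l).Finite ∧
      ((S g k l).ncard : ℝ) ≤ P₂.eval ((min k l : ℕ) : ℝ))
    (hT : ∀ k l : ℕ, (TSet S k l).Finite ∧
      ((TSet S k l).ncard : ℝ) ≤ P₃.eval ((min k l : ℕ) : ℝ)) :
    RapidDecay ℓ := by
  have mem_closure (g : G) : g ∈ Submonoid.closure (X ∪ X⁻¹) := by
    rw [← Subgroup.closure_toSubmonoid, hXgen]
    trivial
  obtain rfl : ℓ = wordLength (X ∪ X⁻¹) := funext hℓ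
  have fiber_subset (k l : ℕ) (f₁ f₂ : G) : {m | ∃ g, (f₁, m, f₂) ∈ S g k l} ⊆ TSet S k l :=
    fun _ ⟨g, hg⟩ ↦ ⟨g, f₁, f₂, hg⟩
  exact rapidDecay_of_D1_D2_general _
    (fun g ↦ wordLength_inv (by simp [union_comm]) (mem_closure g))
    (fun g h ↦ wordLength_mul_le (mem_closure g) (mem_closure h)) 𝒬 P₁ hD1 K P₂ P₃ S hcover hS
    fun k l f₁ f₂ ↦ finite_and_ncard_le_of_subset (fiber_subset k l f₁ f₂) (hT k l)

end ArtinRD
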